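/- Let D ∈ ℍ^{m×n}, Ω ⊆ Fin m × Fin n, and let A# ∈ ℍ^{m×r}, B# ∈ ℍ^{r×n}, X# ∈ ℍ^{m×n} with X#_{ij} = D_{ij} for all (i,j) ∈ Ω. Suppose (A#, B#, X#) is a global minimizer of f(A,B,X) = ½‖A·B − X‖_F² over all triples (A, B, X) with A ∈ ℍ^{m×r}, B ∈ ℍ^{r×n}, X ∈ ℍ^{m×n} satisfying X_{ij} = D_{ij} for all (i,j) ∈ Ω. Then (A#·B# − X#)·(B#)ᴴ = 0, (A#)ᴴ·(A#·B# − X#) = 0, and X#_{ij} = (A#·B#)_{ij} for all (i,j) ∉ Ω. -/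

import Mathlib

open scoped Quaternion Matrix

/-- The Frobenius norm of a quaternion matrix. -/
noncomputable def frob {m n : ℕ} (A : Matrix (Fin m) (Fin n) ℍ[ℝ]) : ℝ :=
  Real.sqrt (∑ i, ∑ j, ‖A i j‖ ^ 2)

/-!
Each block subproblem (in `A`, in `B` and in `X`) minimizes `½‖L Y - b‖²` for a real-linear map `L`
over an affine set, so at a local minimizer the residual is orthogonal, for the real Frobenius inner
product, to `L V` for every feasible direction `V`. Multiplication by `B` on the right and by `A` on
the left have adjoints given by `Bᴴ` and `Aᴴ`; this needs only that the real part of a product of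
two quaternions is symmetric, which survives noncommutativity.
-/

open scoped RealInnerProductSpace Matrix.Norms.Frobenius

section FirstOrderCondition

variable {V E : Type*} [AddCommGroup V] [Module ℝ V] [TopologicalSpace V] [ContinuousAdd V]
  [ContinuousSMul ℝ V] [NormedAddCommGroup E] [InnerProductSpace ℝ E]

theorem inner_map_eq_zero_of_isLocalMinOn (L : V →ₗ[ℝ] E) {b : E} {s : Set V} {x v : V}
    (hmin : IsLocalMinOn (fun y ↦ (1 / 2) * ‖L y - b‖ ^ 2) s x) (hv : ∀ t : ℝ, x + t • v ∈ s) :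
    ⟪L x - b, L v⟫ = 0 := by
  have hline : Filter.Tendsto (fun t : ℝ ↦ x + t • v) (nhds 0) (nhdsWithin x s) := by
    refine tendsto_nhdsWithin_iff.mpr ⟨?_, .of_forall hv⟩
    simpa using (show Continuous fun t : ℝ ↦ x + t • v by fun_prop).tendsto 0
  have hmin_line : IsLocalMin (fun t : ℝ ↦ (1 / 2) * ‖L x - b + t • L v‖ ^ 2) 0 := by
    filter_upwards [hline hmin] with t ht
    simpa [add_sub_right_comm] using ht
  have hline_deriv : HasDerivAt (fun t : ℝ ↦ L x - b + t • L v) (L v) 0 := by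
    simpa using ((hasDerivAt_id (0 : ℝ)).smul_const (L v)).const_add (L x - b)
  simpa using hmin_line.hasDerivAt_eq_zero (hline_deriv.norm_sq.const_mul (1 / 2))

end FirstOrderCondition

theorem frobenius_norm_sq_eq_sum {m n E : Type*} [Fintype m] [Fintype n]
    [SeminormedAddCommGroup E] (A : Matrix m n E) : ‖A‖ ^ 2 = ∑ i, ∑ j, ‖A i j‖ ^ 2 := by
  simp only [Matrix.frobenius_norm_def, ← Real.sqrt_eq_rpow, Real.rpow_two]
  exact Real.sq_sqrt (by positivity)

/-- The Frobenius inner product on matrices with entries in a real inner product space, inducing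
Mathlib's Frobenius norm. Like that norm, it is only a local instance. -/
noncomputable abbrev frobeniusInnerProductSpace {m n E : Type*} [Fintype m] [Fintype n]
    [SeminormedAddCommGroup E] [InnerProductSpace ℝ E] : InnerProductSpace ℝ (Matrix m n E) where
  inner A B := ∑ i, ∑ j, ⟪A i j, B i j⟫
  norm_sq_eq_re_inner A := by simp [frobenius_norm_sq_eq_sum]
  conj_inner_symm A B := by simp [real_inner_comm]
  add_left A B C := by simp [inner_add_left, Finset.sum_add_distrib]
  smul_left A B c := by simp [real_inner_smul_left, Finset.mul_sum]

attribute [local instance] frobeniusInnerProductSpace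

section FrobeniusInnerProduct

variable {m n E : Type*} [Fintype m] [Fintype n] [SeminormedAddCommGroup E]
  [InnerProductSpace ℝ E]

theorem frobenius_inner_def (A B : Matrix m n E) : ⟪A, B⟫ = ∑ i, ∑ j, ⟪A i j, B i j⟫ :=
  rfl

theorem frobenius_inner_single [DecidableEq m] [DecidableEq n] (A : Matrix m n E) (i : m) (j : n)
    (x : E) : ⟪A, Matrix.single i j x⟫ = ⟪A i j, x⟫ := by
  rw [frobenius_inner_def, Finset.sum_eq_single i, Finset.sum_eq_single j]
  · rw [Matrix.single_apply_same]
  · intro j' _ hj'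
    rw [Matrix.single_apply_of_col_ne _ _ hj'.symm, inner_zero_right]
  · simp
  · intro i' _ hi'
    simp [Matrix.single_apply_of_row_ne hi'.symm]
  · simp

end FrobeniusInnerProduct

theorem apply_eq_of_isLocalMinOn_of_notMem {m n E : Type*} [Fintype m] [Fintype n]
    [NormedAddCommGroup E] [InnerProductSpace ℝ E] {C D X : Matrix m n E} {Ω : Set (m × n)}
    (hfeas : ∀ p ∈ Ω, X p.1 p.2 = D p.1 p.2)
    (hmin : IsLocalMinOn (fun X' ↦ (1 / 2) * ‖C - X'‖ ^ 2)
      {X' | ∀ p ∈ Ω, X' p.1 p.2 = D p.1 p.2} X)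
    {p : m × n} (hp : p ∉ Ω) : X p.1 p.2 = C p.1 p.2 := by
  classical
  set V := Matrix.single p.1 p.2 ((X - C) p.1 p.2) with hV
  have hdir : ∀ t : ℝ, X + t • V ∈ {X' : Matrix m n E | ∀ p ∈ Ω, X' p.1 p.2 = D p.1 p.2} := by
    intro t q hq
    have hpq : ¬(p.1 = q.1 ∧ p.2 = q.2) := fun h ↦ hp (Prod.ext h.1 h.2 ▸ hq)
    simp [hV, Matrix.single_apply_of_ne _ _ _ _ _ hpq, hfeas q hq]
  have horth : ⟪X - C, V⟫ = 0 :=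
    inner_map_eq_zero_of_isLocalMinOn LinearMap.id
      (by simpa only [norm_sub_rev C, LinearMap.id_apply] using hmin) hdir
  rw [hV, frobenius_inner_single, inner_self_eq_zero] at horth
  exact sub_eq_zero.mp horth

section Quaternion

theorem quaternion_re_mul_comm {R : Type*} [CommRing R] (a b : ℍ[R]) : (a * b).re = (b * a).re := by
  simp only [Quaternion.re_mul]
  ring

theorem quaternion_inner_mul_right (a b c : ℍ[ℝ]) : ⟪a, b * c⟫ = ⟪a * star c, b⟫ := by
  simp only [Quaternion.inner_def, star_mul, mul_assoc]

theorem quaternion_inner_mul_left (a b c : ℍ[ℝ]) : ⟪a, b * c⟫ = ⟪star b * a, c⟫ := by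
  simp only [Quaternion.inner_def, star_mul]
  rw [← mul_assoc, quaternion_re_mul_comm, mul_assoc]

variable {m r n : Type*} [Fintype m] [Fintype r] [Fintype n]

theorem frobenius_inner_mul_right (E : Matrix m n ℍ[ℝ]) (A : Matrix m r ℍ[ℝ])
    (B : Matrix r n ℍ[ℝ]) : ⟪E, A * B⟫ = ⟪E * Bᴴ, A⟫ := by
  simp only [frobenius_inner_def, Matrix.mul_apply, Matrix.conjTranspose_apply, inner_sum,
    sum_inner, quaternion_inner_mul_right]
  exact Finset.sum_congr rfl fun _ _ ↦ Finset.sum_comm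

theorem frobenius_inner_mul_left (E : Matrix m n ℍ[ℝ]) (A : Matrix m r ℍ[ℝ])
    (B : Matrix r n ℍ[ℝ]) : ⟪E, A * B⟫ = ⟪Aᴴ * E, B⟫ := by
  simp only [frobenius_inner_def, Matrix.mul_apply, Matrix.conjTranspose_apply, inner_sum,
    sum_inner, quaternion_inner_mul_left]
  rw [Finset.sum_comm_cycle]
  exact Finset.sum_congr rfl fun _ _ ↦ Finset.sum_comm

variable {A : Matrix m r ℍ[ℝ]} {B : Matrix r n ℍ[ℝ]} {X : Matrix m n ℍ[ℝ]}

theorem sub_mul_conjTranspose_eq_zero_of_isLocalMin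
    (hmin : IsLocalMin (fun A' ↦ (1 / 2) * ‖A' * B - X‖ ^ 2) A) : (A * B - X) * Bᴴ = 0 := by
  refine ext_inner_right ℝ fun V ↦ ?_
  rw [← frobenius_inner_mul_right, inner_zero_left]
  exact inner_map_eq_zero_of_isLocalMinOn (mulRightLinearMap m ℝ B) (hmin.on Set.univ)
    fun _ ↦ Set.mem_univ _

theorem conjTranspose_mul_sub_eq_zero_of_isLocalMin
    (hmin : IsLocalMin (fun B' ↦ (1 / 2) * ‖A * B' - X‖ ^ 2) B) : Aᴴ * (A * B - X) = 0 := by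
  refine ext_inner_right ℝ fun V ↦ ?_
  rw [← frobenius_inner_mul_left, inner_zero_left]
  exact inner_map_eq_zero_of_isLocalMinOn (mulLeftLinearMap n ℝ A) (hmin.on Set.univ)
    fun _ ↦ Set.mem_univ _

theorem minimizer_is_stationary_general (D : Matrix m n ℍ[ℝ]) (Ω : Set (m × n))
    (A : Matrix m r ℍ[ℝ]) (B : Matrix r n ℍ[ℝ]) (X : Matrix m n ℍ[ℝ])
    (hfeas : ∀ p ∈ Ω, X p.1 p.2 = D p.1 p.2)
    (hminA : IsLocalMin (fun A' ↦ (1 / 2) * ‖A' * B - X‖ ^ 2) A)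
    (hminB : IsLocalMin (fun B' ↦ (1 / 2) * ‖A * B' - X‖ ^ 2) B)
    (hminX : IsLocalMinOn (fun X' ↦ (1 / 2) * ‖A * B - X'‖ ^ 2)
      {X' | ∀ p ∈ Ω, X' p.1 p.2 = D p.1 p.2} X) :
    (A * B - X) * Bᴴ = 0 ∧ Aᴴ * (A * B - X) = 0 ∧
      ∀ p : m × n, p ∉ Ω → X p.1 p.2 = (A * B) p.1 p.2 :=
  ⟨sub_mul_conjTranspose_eq_zero_of_isLocalMin hminA,
    conjTranspose_mul_sub_eq_zero_of_isLocalMin hminB,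
    fun _ ↦ apply_eq_of_isLocalMinOn_of_notMem hfeas hminX⟩

end Quaternion

theorem frob_eq_norm {m n : ℕ} (A : Matrix (Fin m) (Fin n) ℍ[ℝ]) : frob A = ‖A‖ := by
  rw [frob, ← frobenius_norm_sq_eq_sum, Real.sqrt_sq (norm_nonneg A)]

/-- First-order optimality: a global minimizer of ½‖A·B − X‖_F² over feasible
triples (X agreeing with D on Ω) is a stationary point. -/
theorem minimizer_is_stationary {m r n : ℕ}
    (D : Matrix (Fin m) (Fin n) ℍ[ℝ]) (Ω : Set (Fin m × Fin n))
    (A : Matrix (Fin m) (Fin r) ℍ[ℝ]) (B : Matrix (Fin r) (Fin n) ℍ[ℝ])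
    (X : Matrix (Fin m) (Fin n) ℍ[ℝ])
    (hfeas : ∀ p ∈ Ω, X p.1 p.2 = D p.1 p.2)
    (hmin : ∀ (A' : Matrix (Fin m) (Fin r) ℍ[ℝ]) (B' : Matrix (Fin r) (Fin n) ℍ[ℝ])
      (X' : Matrix (Fin m) (Fin n) ℍ[ℝ]), (∀ p ∈ Ω, X' p.1 p.2 = D p.1 p.2) →
      (1 / 2) * frob (A * B - X) ^ 2 ≤ (1 / 2) * frob (A' * B' - X') ^ 2) :
    (A * B - X) * Bᴴ = 0 ∧ Aᴴ * (A * B - X) = 0 ∧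
      ∀ p : Fin m × Fin n, p ∉ Ω → X p.1 p.2 = (A * B) p.1 p.2 := by
  simp only [frob_eq_norm] at hmin
  exact minimizer_is_stationary_general D Ω A B X hfeas (.of_forall fun A' ↦ hmin A' B X hfeas)
    (.of_forall fun B' ↦ hmin A B' X hfeas) (IsMinOn.localize fun X' hX' ↦ hmin A B X' hX')
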